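/- Let T = T[0]T[1]...T[n-1] be a string of length n ≥ 1 over a linearly ordered alphabet such that T[n-1] is strictly smaller than every other symbol occurring in T and occurs only at position n-1. Let ISA be the inverse suffix array of T, and for 0 ≤ i < n define NSV_ISA(i) = min{ j : i < j < n, ISA[j] < ISA[i] } if such j exists and NSV_ISA(i) = n otherwise. Then for every 0 ≤ i < n, the length of the longest prefix of the suffix T_i that is a Lyndon word equals NSV_ISA(i) - i. -/

import Mathlib

/-- The suffix `T[i..n-1]` of the string of length `n` represented by `T : ℕ → α`. -/
def suffixAt {α : Type*} (T : ℕ → α) (n i : ℕ) : List α :=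
  (List.range (n - i)).map (fun k => T (i + k))

/-- A Lyndon word: a nonempty string strictly lexicographically smaller than
all of its proper nonempty suffixes. -/
def IsLyndon {α : Type*} [LinearOrder α] (w : List α) : Prop :=
  w ≠ [] ∧ ∀ i, 0 < i → i < w.length → List.Lex (· < ·) w (w.drop i)

/-- Length of the longest prefix of the suffix `T_i` that is a Lyndon word. -/
noncomputable def longestLyndonPrefixLen {α : Type*} [LinearOrder α] (T : ℕ → α) (n i : ℕ) : ℕ :=
  sSup {L | L ≤ n - i ∧ IsLyndon ((suffixAt T n i).take L)}

/-!
Let `m` be the least positive shift for which the suffix `w.drop m` is smaller than `w`, and write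
`w = u ++ x` with `u.length = m`, so that `x < w`.

If `u` were larger than one of its proper suffixes `v`, then either a mismatch gives `v ++ x < w`,
against the minimality of `m`, or `v` is a prefix of `u`, say `u = v ++ t`; then cancelling `v` from
`w < v ++ x` gives `t ++ x < x < w`, where `t ++ x` is the suffix of `w` at the smaller shift
`v.length`, again against minimality. Hence `u` is a Lyndon word. A longer prefix is not: a Lyndon
prefix is smaller than its own suffix at shift `m`, and since that suffix is shorter the comparison
is decided by a mismatch, which would give `w < w.drop m`.

For `w = T_i` the shift `m` is the distance from `i` to the next lexicographically smaller suffix of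
`T`, where the empty suffix at position `n` plays the role of the default value `n`.
-/

theorem isPrefix_or_forall_lex_append {α : Type*} {r : α → α → Prop} {u v : List α}
    (h : List.Lex r u v) : u <+: v ∨ ∀ x y, List.Lex r (u ++ x) (v ++ y) := by
  induction h with
  | nil => exact Or.inl List.nil_prefix
  | rel hab => exact Or.inr fun _ _ => List.Lex.rel hab
  | cons _ ih =>
    exact ih.imp (fun hpre => List.cons_prefix_cons.2 ⟨rfl, hpre⟩)
      fun hlex x y => List.Lex.cons (hlex x y)

section Lyndon

variable {α : Type*} [LinearOrder α] {u w x : List α} {m : ℕ}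

theorem IsLyndon.append_lt_drop_append (hu : IsLyndon u) {d : ℕ} (hd : 0 < d)
    (hdu : d < u.length) (x y : List α) : u ++ x < u.drop d ++ y := by
  rcases isPrefix_or_forall_lex_append (hu.2 d hd hdu) with hpre | hlt
  · have hle := hpre.length_le
    rw [List.length_drop] at hle
    omega
  · exact hlt x y

theorem IsLyndon.lt_drop_of_take {L : ℕ} (hL : L ≤ w.length) (hw : IsLyndon (w.take L))
    (hm : 0 < m) (hmL : m < L) : w < w.drop m := by
  have hmlen : m < (w.take L).length := by rwa [List.length_take_of_le hL]
  have hlt := hw.append_lt_drop_append hm hmlen (w.drop L) (w.drop L)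
  rwa [← List.drop_append_of_le_length hmlen.le, List.take_append_drop] at hlt

theorem drop_append_le_of_isPrefix {v : List α} (hv : v <+: u) (hle : u ++ x ≤ v ++ x) :
    (u ++ x).drop v.length ≤ x := by
  obtain ⟨t, rfl⟩ := hv
  rw [List.append_assoc] at hle ⊢
  rw [List.drop_left]
  exact not_lt.1 fun hlt => hle.not_gt (List.append_left_lt hlt)

theorem isLyndon_of_isLeast_drop_lt
    (h : IsLeast {d | 0 < d ∧ (u ++ x).drop d < u ++ x} u.length) : IsLyndon u := by
  obtain ⟨⟨hpos, hx⟩, hmin⟩ := h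
  rw [List.drop_left] at hx
  have hle {d : ℕ} (hd : 0 < d) (hdu : d < u.length) : u ++ x ≤ (u ++ x).drop d :=
    not_lt.1 fun hlt => hdu.not_ge (hmin ⟨hd, hlt⟩)
  refine ⟨List.length_pos_iff.1 hpos, fun d hd hdu => ?_⟩
  have hlen : (u.drop d).length = u.length - d := List.length_drop
  have hle_drop : u ++ x ≤ u.drop d ++ x := by
    simpa only [List.drop_append_of_le_length hdu.le] using hle hd hdu
  by_contra hnlt
  have hne : u.drop d ≠ u := fun heq => by
    rw [heq] at hlen
    omega
  rcases isPrefix_or_forall_lex_append (lt_of_le_of_ne (not_lt.1 hnlt) hne) with hpre | hlt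
  · have hle_shift := hle (d := (u.drop d).length) (by omega) (by omega)
    exact (hle_shift.trans (drop_append_le_of_isPrefix hpre hle_drop)).not_gt hx
  · exact hle_drop.not_gt (hlt x x)

theorem isGreatest_isLyndon_take (h : IsLeast {d | 0 < d ∧ w.drop d < w} m) :
    IsGreatest {L | L ≤ w.length ∧ IsLyndon (w.take L)} m := by
  obtain ⟨hpos, hlt⟩ := h.1
  have hm : m ≤ w.length := by
    have hw : w ≠ [] := fun hw => List.not_lt_nil _ (hw ▸ hlt)
    refine h.2 ⟨List.length_pos_iff.2 hw, ?_⟩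
    rw [List.drop_length]
    exact (List.lex_nil_or_eq_nil w).resolve_right hw
  refine ⟨⟨hm, ?_⟩, fun L hL => ?_⟩
  · apply isLyndon_of_isLeast_drop_lt (x := w.drop m)
    rwa [List.take_append_drop, List.length_take_of_le hm]
  · by_contra! hmL
    exact lt_asymm hlt (hL.2.lt_drop_of_take hL.1 hpos hmL)

end Lyndon

/-- The next smaller value `NSV_f(i)` of a finite sequence `f`: the *position* of the first entry
after `i` that is smaller than `f i`, with the out-of-range position `n` if there is none. -/
noncomputable def nextSmallerValue {β : Type*} [LT β] {n : ℕ} (f : Fin n → β) (i : Fin n) : ℕ :=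
  sInf {j : ℕ | j = n ∨ ∃ h : j < n, (i : ℕ) < j ∧ f ⟨j, h⟩ < f i}

section NextSmallerValue

variable {β γ : Type*} [LT β] [LT γ] {n : ℕ}

theorem nextSmallerValue_eq_or (f : Fin n → β) (i : Fin n) :
    nextSmallerValue f i = n ∨
      ∃ h : nextSmallerValue f i < n, (i : ℕ) < nextSmallerValue f i ∧
        f ⟨nextSmallerValue f i, h⟩ < f i :=
  Nat.sInf_mem (s := {j : ℕ | j = n ∨ ∃ h : j < n, (i : ℕ) < j ∧ f ⟨j, h⟩ < f i}) ⟨n, Or.inl rfl⟩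

theorem nextSmallerValue_le_length (f : Fin n → β) (i : Fin n) : nextSmallerValue f i ≤ n :=
  Nat.sInf_le (Or.inl rfl)

theorem nextSmallerValue_le {f : Fin n → β} {i j : Fin n} (hij : i < j) (hlt : f j < f i) :
    nextSmallerValue f i ≤ j :=
  Nat.sInf_le (Or.inr ⟨j.2, hij, hlt⟩)

theorem lt_nextSmallerValue (f : Fin n → β) (i : Fin n) : (i : ℕ) < nextSmallerValue f i := by
  rcases nextSmallerValue_eq_or f i with heq | ⟨_, hlt, _⟩
  · exact heq.symm ▸ i.2
  · exact hlt

theorem nextSmallerValue_congr {f : Fin n → β} {g : Fin n → γ} {i : Fin n}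
    (h : ∀ j, f j < f i ↔ g j < g i) : nextSmallerValue f i = nextSmallerValue g i := by
  simp only [nextSmallerValue, h]

end NextSmallerValue

theorem length_suffixAt {α : Type*} (T : ℕ → α) (n i : ℕ) : (suffixAt T n i).length = n - i := by
  rw [suffixAt, List.length_map, List.length_range]

theorem drop_suffixAt {α : Type*} (T : ℕ → α) (n i d : ℕ) :
    (suffixAt T n i).drop d = suffixAt T n (i + d) := by
  apply List.ext_getElem
  · rw [List.length_drop, length_suffixAt, length_suffixAt, Nat.sub_sub]
  · intro k _ _
    simp [suffixAt, Nat.add_assoc]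

section SuffixOrder

variable {α : Type*} [LinearOrder α] (T : ℕ → α) {n : ℕ}

theorem suffixAt_nextSmallerValue_lt (i : Fin n) :
    suffixAt T n (nextSmallerValue (fun k : Fin n => suffixAt T n k) i) < suffixAt T n i := by
  rcases nextSmallerValue_eq_or (fun k : Fin n => suffixAt T n k) i with heq | ⟨_, _, hlt⟩
  · have hempty : suffixAt T n n = [] :=
      List.eq_nil_of_length_eq_zero (by rw [length_suffixAt, Nat.sub_self])
    have hne : suffixAt T n i ≠ [] := by
      rw [← List.length_pos_iff, length_suffixAt]
      exact Nat.sub_pos_of_lt i.2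
    rw [heq, hempty]
    exact (List.lex_nil_or_eq_nil _).resolve_right hne
  · exact hlt

theorem isLeast_drop_suffixAt_lt (i : Fin n) :
    IsLeast {d | 0 < d ∧ (suffixAt T n i).drop d < suffixAt T n i}
      (nextSmallerValue (fun k : Fin n => suffixAt T n k) i - i) := by
  have hi := lt_nextSmallerValue (fun k : Fin n => suffixAt T n k) i
  have hn := nextSmallerValue_le_length (fun k : Fin n => suffixAt T n k) i
  simp only [drop_suffixAt]
  refine ⟨⟨Nat.sub_pos_of_lt hi, ?_⟩, fun d ⟨hd, hlt⟩ => ?_⟩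
  · rw [Nat.add_sub_cancel' hi.le]
    exact suffixAt_nextSmallerValue_lt T i
  · by_contra! hdm
    have hle := nextSmallerValue_le (f := fun k : Fin n => suffixAt T n k) (i := i)
      (j := ⟨i + d, by omega⟩) (Fin.lt_def.2 (Nat.lt_add_of_pos_right hd)) hlt
    exact absurd hle (by simp only; omega)

theorem longestLyndonPrefixLen_eq_nextSmallerValue_suffixAt_sub (i : Fin n) :
    longestLyndonPrefixLen T n i = nextSmallerValue (fun k : Fin n => suffixAt T n k) i - i := by
  have hgreatest := isGreatest_isLyndon_take (isLeast_drop_suffixAt_lt T i)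
  rw [length_suffixAt] at hgreatest
  exact hgreatest.csSup_eq

end SuffixOrder

theorem lyndonArray_from_isa_nsv_general {α : Type*} [LinearOrder α] (T : ℕ → α) (n : ℕ)
    (sa : Equiv.Perm (Fin n))
    (hsa : ∀ a b : Fin n, a < b →
      List.Lex (· < ·) (suffixAt T n (sa a)) (suffixAt T n (sa b))) (i : Fin n) :
    longestLyndonPrefixLen T n i = nextSmallerValue (fun k => (sa.symm k : ℕ)) i - i := by
  have hmono : StrictMono fun a => suffixAt T n (sa a) := hsa
  have hrank (j : Fin n) : suffixAt T n j < suffixAt T n i ↔ (sa.symm j : ℕ) < sa.symm i := by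
    simpa using hmono.lt_iff_lt (a := sa.symm j) (b := sa.symm i)
  rw [longestLyndonPrefixLen_eq_nextSmallerValue_suffixAt_sub, nextSmallerValue_congr hrank]

/-- The Lyndon array can be obtained from the inverse suffix array
`ISA = sa⁻¹` by a next-smaller-value computation: for every `i`, the length of the
longest Lyndon prefix of `T_i` equals `NSV_ISA(i) - i`, where `NSV_ISA(i)` is the
smallest `j > i` with `ISA[j] < ISA[i]` (or `n` if none exists). -/
theorem lyndonArray_from_isa_nsv {α : Type*} [LinearOrder α]
    (T : ℕ → α) (n : ℕ) (hn : 1 ≤ n)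
    (hend : ∀ k, k < n - 1 → T (n - 1) < T k)
    (sa : Equiv.Perm (Fin n))
    (hsa : ∀ a b : Fin n, a < b →
      List.Lex (· < ·) (suffixAt T n (sa a)) (suffixAt T n (sa b))) :
    ∀ i : Fin n,
      longestLyndonPrefixLen T n (i : ℕ) =
        sInf {j : ℕ | j = n ∨ ∃ h : j < n,
          (i : ℕ) < j ∧ (sa.symm ⟨j, h⟩ : ℕ) < (sa.symm i : ℕ)} - (i : ℕ) :=
  lyndonArray_from_isa_nsv_general T n sa hsa
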